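/- arXiv:2401.02598 — 6 statements merged into one kernel-verified Lean document; each statement's English description precedes it below -/
import Mathlib

section
/- Let (X,d) be a metric space with base point x₀ and let A, B ⊆ X. Then the following are equivalent: (1) there exist C > 0 and r₀ > 0 such that for every x ∈ X with |x| ≥ r₀ and every a ∈ A, b ∈ B one has max{d(x,a), d(x,b)} ≥ C|x|; (2) there exist D > 0 and r₁ > 0 such that for every r ≥ r₁ and every a ∈ A, b ∈ B with |a| ≥ r and |b| ≥ r one has d(a,b) ≥ D·r. -/
/-!
Both directions are triangle inequalities. For (1) ⇒ (2), take `x = a`, where the maximum is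
`d(a, b)`. For (2) ⇒ (1), put `m = max (d(x, a)) (d(x, b))`; then `|a|, |b| ≥ |x| - m`. If
`|x| - m ≥ r₁`, then (2) gives `D (|x| - m) ≤ d(a, b) ≤ 2 m`, which is `m ≥ D / (D + 2) * |x|`;
otherwise `m > |x| - r₁`, which is at least `D / (D + 2) * |x|` as soon as
`|x| ≥ (D + 2) / 2 * r₁`.
-/

section Divergence

variable {X : Type*} [PseudoMetricSpace X]

/-- Linear divergence of the pair `{A, B}` with explicit constants: no point `x` at distance at
least `r₀` from the base point `x₀` is closer than `C * dist x x₀` to points of both sets. -/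
def DivergesLinearlyWith (x₀ : X) (A B : Set X) (C r₀ : ℝ) : Prop :=
  ∀ x : X, r₀ ≤ dist x x₀ → ∀ a ∈ A, ∀ b ∈ B, C * dist x x₀ ≤ max (dist x a) (dist x b)

/-- Linear separation of `A` and `B` outside large balls around the base point `x₀`, with explicit
constants: for `r ≥ r₁`, the parts of `A` and `B` outside the open ball of radius `r` are at
distance at least `D * r`. It is stated pointwise, so that empty parts need no convention. -/
def SeparatedLinearlyWith (x₀ : X) (A B : Set X) (D r₁ : ℝ) : Prop :=
  ∀ r : ℝ, r₁ ≤ r → ∀ a ∈ A, ∀ b ∈ B, r ≤ dist a x₀ → r ≤ dist b x₀ → D * r ≤ dist a b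

theorem dist_le_two_mul_max_dist (x a b : X) : dist a b ≤ 2 * max (dist x a) (dist x b) :=
  calc
    dist a b ≤ dist x a + dist x b := dist_triangle_left a b x
    _ ≤ max (dist x a) (dist x b) + max (dist x a) (dist x b) :=
      add_le_add (le_max_left _ _) (le_max_right _ _)
    _ = 2 * max (dist x a) (dist x b) := (two_mul _).symm

variable {x₀ : X} {A B : Set X} {C D r₀ r₁ : ℝ}

theorem DivergesLinearlyWith.mul_dist_le_dist (h : DivergesLinearlyWith x₀ A B C r₀)
    {a b : X} (ha : a ∈ A) (hb : b ∈ B) (har : r₀ ≤ dist a x₀) : C * dist a x₀ ≤ dist a b := by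
  simpa only [dist_self, max_eq_right dist_nonneg] using h a har a ha b hb

theorem DivergesLinearlyWith.separatedLinearlyWith (h : DivergesLinearlyWith x₀ A B C r₀)
    (hC : 0 ≤ C) : SeparatedLinearlyWith x₀ A B C r₀ := fun r hr a ha b hb har _ ↦
  calc
    C * r ≤ C * dist a x₀ := mul_le_mul_of_nonneg_left har hC
    _ ≤ dist a b := h.mul_dist_le_dist ha hb (hr.trans har)

theorem SeparatedLinearlyWith.divergesLinearlyWith (h : SeparatedLinearlyWith x₀ A B D r₁)
    (hD : 0 ≤ D) : DivergesLinearlyWith x₀ A B (D / (D + 2)) ((D + 2) / 2 * r₁) := by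
  intro x hx a ha b hb
  set m := max (dist x a) (dist x b)
  suffices D * dist x x₀ ≤ (D + 2) * m by
    rwa [div_mul_eq_mul_div, div_le_iff₀' (by positivity)]
  rcases le_or_gt r₁ (dist x x₀ - m) with hfar | hnear
  · have ha_far : dist x x₀ - m ≤ dist a x₀ := by
      linarith [dist_triangle x a x₀, le_max_left (dist x a) (dist x b)]
    have hb_far : dist x x₀ - m ≤ dist b x₀ := by
      linarith [dist_triangle x b x₀, le_max_right (dist x a) (dist x b)]
    have hsep : D * (dist x x₀ - m) ≤ 2 * m :=
      (h _ hfar a ha b hb ha_far hb_far).trans (dist_le_two_mul_max_dist x a b)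
    linarith
  · have hm : (D + 2) * (dist x x₀ - m) ≤ (D + 2) * r₁ :=
      mul_le_mul_of_nonneg_left hnear.le (by positivity)
    linarith

theorem sublinear_divergence_equiv_general (x₀ : X) (A B : Set X) :
    (∃ C > 0, ∃ r₀ > 0, DivergesLinearlyWith x₀ A B C r₀) ↔
      ∃ D > 0, ∃ r₁ > 0, SeparatedLinearlyWith x₀ A B D r₁ := by
  constructor
  · rintro ⟨C, hC, r₀, hr₀, h⟩
    exact ⟨C, hC, r₀, hr₀, h.separatedLinearlyWith hC.le⟩
  · rintro ⟨D, hD, r₁, hr₁, h⟩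
    exact ⟨D / (D + 2), by positivity, (D + 2) / 2 * r₁, by positivity,
      h.divergesLinearlyWith hD.le⟩

end Divergence

/-- For subsets `A, B` of a pointed metric space `(X, d, x₀)`,
the pair `{A, B}` diverges as a linear function (condition (1)) iff the parts of
`A` and `B` outside large balls around `x₀` are far apart (condition (2)). -/
theorem sublinear_divergence_equiv {X : Type*} [MetricSpace X] (x₀ : X) (A B : Set X) :
    (∃ C > (0 : ℝ), ∃ r₀ > (0 : ℝ), ∀ x : X, r₀ ≤ dist x x₀ →
      ∀ a ∈ A, ∀ b ∈ B, C * dist x x₀ ≤ max (dist x a) (dist x b)) ↔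
    (∃ D > (0 : ℝ), ∃ r₁ > (0 : ℝ), ∀ r : ℝ, r₁ ≤ r →
      ∀ a ∈ A, ∀ b ∈ B, r ≤ dist a x₀ → r ≤ dist b x₀ → D * r ≤ dist a b) :=
  sublinear_divergence_equiv_general x₀ A B
end

section
/- Let (X,d) be a metric space with base point x₀ and let A, B ⊆ X. Suppose there exist α with 0 < α < 1/5 and r₀ > 0 such that for every x ∈ X with |x| ≥ r₀ and every a ∈ A, b ∈ B one has max{d(x,a), d(x,b)} ≥ 4α|x|. Define St(A) = ⋃{N(z, α|z|) : z ∈ X, N(z, α|z|) ∩ A ≠ ∅} and St(B) = ⋃{N(z, α|z|) : z ∈ X, N(z, α|z|) ∩ B ≠ ∅}. Then for every x ∈ X with |x| ≥ r₀ and every u ∈ St(A), v ∈ St(B) one has max{d(x,u), d(x,v)} ≥ α|x|. -/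
/-!
If `u` and `a` lie in a common ball `N(z, α|z|)`, then `|z| ≤ |x| + d(x, u) + α|z|` bounds `|z|`,
and with it `d(u, a) ≤ 2α|z|`, in terms of `|x|` and `d(x, u)`. Hence if `x` were close to a point
of `St(A)` and to a point of `St(B)`, it would also be close to a point of `A` and to a point
of `B`.
-/

section PseudoMetricSpace

open Metric

variable {X : Type*} [PseudoMetricSpace X] {x₀ x u z a : X} {A B : Set X} {r₀ α β γ : ℝ}

/-- Linear divergence of the pair `{A, B}` with constant `c`, as seen from the base point `x₀`
and outside the open ball of radius `r₀` about it. -/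
def DivergesLinearly (x₀ : X) (r₀ c : ℝ) (A B : Set X) : Prop :=
  ∀ x : X, r₀ ≤ dist x x₀ → ∀ a ∈ A, ∀ b ∈ B, c * dist x x₀ ≤ max (dist x a) (dist x b)

/-- The star `St(Y)` of `Y` with respect to the cover of `X` by the closed balls `N(z, α|z|)`. -/
def ballStar (x₀ : X) (α : ℝ) (Y : Set X) : Set X :=
  {u : X | ∃ z : X, (closedBall z (α * dist z x₀) ∩ Y).Nonempty ∧
    u ∈ closedBall z (α * dist z x₀)}

lemma one_sub_mul_dist_center_le (hu : u ∈ closedBall z (α * dist z x₀)) :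
    (1 - α) * dist z x₀ ≤ dist x u + dist x x₀ := by
  have hz : dist z x₀ ≤ dist u z + dist x u + dist x x₀ := by
    simpa only [dist_comm z u, dist_comm u x] using dist_triangle4 z u x x₀
  linarith [mem_closedBall.mp hu]

lemma one_sub_mul_dist_le_of_mem_closedBall (hα₀ : 0 ≤ α) (hα₁ : α ≤ 1)
    (hu : u ∈ closedBall z (α * dist z x₀)) (ha : a ∈ closedBall z (α * dist z x₀)) :
    (1 - α) * dist x a ≤ (1 + α) * dist x u + 2 * α * dist x x₀ := by
  have hua : dist u a ≤ 2 * α * dist z x₀ := by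
    linarith [dist_triangle_right u a z, mem_closedBall.mp hu, mem_closedBall.mp ha]
  calc (1 - α) * dist x a
      ≤ (1 - α) * (dist x u + 2 * α * dist z x₀) :=
        mul_le_mul_of_nonneg_left (by linarith [dist_triangle x u a]) (sub_nonneg.mpr hα₁)
    _ = (1 - α) * dist x u + 2 * α * ((1 - α) * dist z x₀) := by ring
    _ ≤ (1 - α) * dist x u + 2 * α * (dist x u + dist x x₀) := by
        gcongr
        exact one_sub_mul_dist_center_le hu
    _ = (1 + α) * dist x u + 2 * α * dist x x₀ := by ring

lemma exists_dist_lt_of_mem_ballStar (hα₀ : 0 ≤ α) (hα₁ : α < 1)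
    (hγ : (1 + α) * β + 2 * α ≤ (1 - α) * γ) (hu : u ∈ ballStar x₀ α A)
    (hxu : dist x u < β * dist x x₀) : ∃ a ∈ A, dist x a < γ * dist x x₀ := by
  obtain ⟨z, ⟨a, haz, haA⟩, huz⟩ := hu
  refine ⟨a, haA, lt_of_mul_lt_mul_left ?_ (sub_nonneg.mpr hα₁.le)⟩
  calc (1 - α) * dist x a
      ≤ (1 + α) * dist x u + 2 * α * dist x x₀ :=
        one_sub_mul_dist_le_of_mem_closedBall hα₀ hα₁.le huz haz
    _ < (1 + α) * (β * dist x x₀) + 2 * α * dist x x₀ := by gcongr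
    _ = ((1 + α) * β + 2 * α) * dist x x₀ := by ring
    _ ≤ (1 - α) * γ * dist x x₀ := by gcongr
    _ = (1 - α) * (γ * dist x x₀) := mul_assoc _ _ _

theorem star_divergence_general (hα₀ : 0 ≤ α) (hα₁ : α < 1)
    (hγ : (1 + α) * β + 2 * α ≤ (1 - α) * γ) (hdiv : DivergesLinearly x₀ r₀ γ A B) :
    DivergesLinearly x₀ r₀ β (ballStar x₀ α A) (ballStar x₀ α B) := by
  intro x hx u hu v hv
  by_contra! h
  obtain ⟨hxu, hxv⟩ := max_lt_iff.mp h
  obtain ⟨a, haA, hxa⟩ := exists_dist_lt_of_mem_ballStar hα₀ hα₁ hγ hu hxu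
  obtain ⟨b, hbB, hxb⟩ := exists_dist_lt_of_mem_ballStar hα₀ hα₁ hγ hv hxv
  exact (hdiv x hx a haA b hbB).not_gt (max_lt hxa hxb)

end PseudoMetricSpace

/-- If `{A, B}` diverges linearly with constant `4α` (`0 < α < 1/5`),
then the stars `St(A)`, `St(B)` with respect to the cover by closed balls
`N(z, α|z|)` diverge linearly with constant `α`. -/
theorem star_divergence {X : Type*} [MetricSpace X] (x₀ : X) (A B : Set X)
    (α : ℝ) (hα0 : 0 < α) (hα : α < 1 / 5) (r₀ : ℝ) (hr₀ : 0 < r₀)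
    (hdiv : ∀ x : X, r₀ ≤ dist x x₀ →
      ∀ a ∈ A, ∀ b ∈ B, 4 * α * dist x x₀ ≤ max (dist x a) (dist x b)) :
    ∀ x : X, r₀ ≤ dist x x₀ →
      ∀ u ∈ {u : X | ∃ z : X, (Metric.closedBall z (α * dist z x₀) ∩ A).Nonempty ∧
        u ∈ Metric.closedBall z (α * dist z x₀)},
      ∀ v ∈ {v : X | ∃ z : X, (Metric.closedBall z (α * dist z x₀) ∩ B).Nonempty ∧
        v ∈ Metric.closedBall z (α * dist z x₀)},
      α * dist x x₀ ≤ max (dist x u) (dist x v) := by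
  have hγ : (1 + α) * α + 2 * α ≤ (1 - α) * (4 * α) := by
    linarith [mul_le_mul_of_nonneg_left hα.le hα0.le]
  exact star_divergence_general hα0.le (hα.trans (by norm_num)) hγ hdiv
end

section
/- Let 0 < c < 1/2, define aₙ = 1/(1−2c)^{n−1} for n ≥ 1, and for each n let fₙ : ℝ → [0,1] be the map with fₙ(t) = 0 for t ≤ aₙ, fₙ(t) = (t − aₙ)/(aₙ₊₁ − aₙ) for aₙ ≤ t ≤ aₙ₊₁, and fₙ(t) = 1 for t ≥ aₙ₊₁. Let s : (0,∞) → (0,∞) be asymptotically sublinear and let ε > 0. Then there exists r₀ > 0 such that for every n ≥ 1, every t with aₙ ≤ t ≤ aₙ₊₁ and t ≥ r₀, and all real numbers t₁, t₂ with |t₁ − t| < s(t) and |t₂ − t| < s(t), one has |fₙ(t₁) − fₙ(t₂)| < ε. -/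
/-!
A piecewise linear map rising from `0` to `1` on `[p, q]` is the projection onto `[p, q]` followed
by an affine map of slope `1 / (q - p)`, so it is `1 / (q - p)`-Lipschitz. Since `aₙ` grows
geometrically, `aₙ₊₁ - aₙ = 2c aₙ₊₁ ≥ 2c t` for `t ≤ aₙ₊₁`, and the values of `fₙ` on `B(t, s(t))`
differ by less than `2 s(t) / (2c t)`, which sublinearity of `s` makes smaller than `ε`.
-/

section

variable {𝕜 : Type*} [Field 𝕜] [LinearOrder 𝕜]

/-- `g` is the piecewise linear bump function that vanishes on `(-∞, p]`, is linear on `[p, q]`, and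
is `1` on `[q, ∞)`. The clauses at the endpoints are incompatible unless `p < q`. -/
structure IsLinearRamp (p q : 𝕜) (g : 𝕜 → 𝕜) : Prop where
  eq_zero : ∀ t, t ≤ p → g t = 0
  eq_div : ∀ t, p ≤ t → t ≤ q → g t = (t - p) / (q - p)
  eq_one : ∀ t, q ≤ t → g t = 1

namespace IsLinearRamp

variable {p q : 𝕜} {g : 𝕜 → 𝕜}

theorem lt (hg : IsLinearRamp p q g) : p < q := by
  by_contra! hqp
  exact zero_ne_one ((hg.eq_zero p le_rfl).symm.trans (hg.eq_one p hqp))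

variable [IsStrictOrderedRing 𝕜]

theorem eq_projIcc_sub_div (hg : IsLinearRamp p q g) (t : 𝕜) :
    g t = (Set.projIcc p q hg.lt.le t - p) / (q - p) := by
  rcases le_total t p with htp | hpt
  · rw [hg.eq_zero t htp, Set.projIcc_of_le_left _ htp, sub_self, zero_div]
  rcases le_total t q with htq | hqt
  · rw [hg.eq_div t hpt htq, Set.projIcc_of_mem _ ⟨hpt, htq⟩]
  · rw [hg.eq_one t hqt, Set.projIcc_of_right_le _ hqt, div_self (sub_pos.2 hg.lt).ne']

theorem abs_sub_le_div (hg : IsLinearRamp p q g) (x y : 𝕜) :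
    |g x - g y| ≤ |x - y| / (q - p) := by
  have hpq : 0 < q - p := sub_pos.2 hg.lt
  rw [hg.eq_projIcc_sub_div x, hg.eq_projIcc_sub_div y, ← sub_div, sub_sub_sub_cancel_right,
    abs_div, abs_of_pos hpq]
  exact div_le_div_of_nonneg_right (Set.abs_projIcc_sub_projIcc hg.lt.le) hpq.le

theorem abs_sub_lt_of_two_mul_le (hg : IsLinearRamp p q g) {t t₁ t₂ r ε : 𝕜}
    (hr : 2 * r ≤ ε * (q - p)) (ht₁ : |t₁ - t| < r) (ht₂ : |t₂ - t| < r) :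
    |g t₁ - g t₂| < ε := by
  have hdist : |t₁ - t₂| < 2 * r :=
    calc |t₁ - t₂| ≤ |t₁ - t| + |t - t₂| := abs_sub_le t₁ t t₂
      _ < r + r := add_lt_add ht₁ (abs_sub_comm t₂ t ▸ ht₂)
      _ = 2 * r := (two_mul r).symm
  calc |g t₁ - g t₂| ≤ |t₁ - t₂| / (q - p) := hg.abs_sub_le_div t₁ t₂
    _ < ε := (div_lt_iff₀ (sub_pos.2 hg.lt)).2 (hdist.trans_le hr)

end IsLinearRamp

theorem bump_diameter_estimate_general [IsStrictOrderedRing 𝕜] {ι : Type*} {δ : 𝕜} (hδ : 0 < δ)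
    {p q : ι → 𝕜} (hgap : ∀ i, δ * q i ≤ q i - p i)
    {f : ι → 𝕜 → 𝕜} (hf : ∀ i, IsLinearRamp (p i) (q i) (f i))
    {s : 𝕜 → 𝕜} (hs : ∀ α > 0, ∃ t₀ > 0, ∀ t > t₀, s t < α * t) {ε : 𝕜} (hε : 0 < ε) :
    ∃ r₀ > 0, ∀ i, ∀ t ≤ q i, r₀ ≤ t →
      ∀ t₁ t₂, |t₁ - t| < s t → |t₂ - t| < s t → |f i t₁ - f i t₂| < ε := by
  obtain ⟨t₀, ht₀, hst⟩ := hs (ε * δ / 2) (by positivity)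
  refine ⟨t₀ + 1, by positivity, fun i t htq hrt t₁ t₂ ↦ (hf i).abs_sub_lt_of_two_mul_le ?_⟩
  calc 2 * s t ≤ 2 * (ε * δ / 2 * t) := by
        gcongr
        exact (hst t ((lt_add_one t₀).trans_le hrt)).le
    _ = ε * (δ * t) := by ring
    _ ≤ ε * (δ * q i) := by gcongr
    _ ≤ ε * (q i - p i) := by gcongr; exact hgap i

end

theorem one_div_pow_sub_one_div_pow_sub_one {K : Type*} [Field K] {b : K} (hb : b ≠ 0) {n : ℕ}
    (hn : n ≠ 0) : 1 / b ^ n - 1 / b ^ (n - 1) = (1 - b) * (1 / b ^ n) := by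
  rw [← pow_sub_one_mul hn b]
  field_simp

/-- Let `0 < c < 1/2`, `aₙ = 1/(1−2c)^(n−1)` for `n ≥ 1`, and let
`fₙ` be the piecewise linear map which is `0` on `(-∞, aₙ]`, linear on
`[aₙ, aₙ₊₁]` and `1` on `[aₙ₊₁, ∞)`.  If `s` is asymptotically sublinear (and
positive on `(0, ∞)`) and `ε > 0`, then there is `r₀ > 0` such that for all
`n ≥ 1`, all `t ∈ [aₙ, aₙ₊₁]` with `t ≥ r₀` and all `t₁, t₂` with
`|t₁ − t| < s(t)` and `|t₂ − t| < s(t)`, one has `|fₙ(t₁) − fₙ(t₂)| < ε`. -/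
theorem bump_diameter_estimate (c : ℝ) (hc0 : 0 < c) (hc : c < 1 / 2)
    (a : ℕ → ℝ) (ha : ∀ n : ℕ, 1 ≤ n → a n = 1 / (1 - 2 * c) ^ (n - 1))
    (f : ℕ → ℝ → ℝ)
    (hf0 : ∀ n : ℕ, 1 ≤ n → ∀ t : ℝ, t ≤ a n → f n t = 0)
    (hfmid : ∀ n : ℕ, 1 ≤ n → ∀ t : ℝ, a n ≤ t → t ≤ a (n + 1) →
      f n t = (t - a n) / (a (n + 1) - a n))
    (hf1 : ∀ n : ℕ, 1 ≤ n → ∀ t : ℝ, a (n + 1) ≤ t → f n t = 1)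
    (s : ℝ → ℝ) (hspos : ∀ t : ℝ, 0 < t → 0 < s t)
    (hs : ∀ α > (0 : ℝ), ∃ t₀ > (0 : ℝ), ∀ t > t₀, s t < α * t)
    (ε : ℝ) (hε : 0 < ε) :
    ∃ r₀ > (0 : ℝ), ∀ n : ℕ, 1 ≤ n → ∀ t : ℝ, a n ≤ t → t ≤ a (n + 1) → r₀ ≤ t →
      ∀ t₁ t₂ : ℝ, |t₁ - t| < s t → |t₂ - t| < s t → |f n t₁ - f n t₂| < ε := by
  have hgap (n : {n : ℕ // 1 ≤ n}) : 2 * c * a (n + 1) ≤ a (n + 1) - a n := by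
    rw [ha n n.2, ha (n + 1) (Nat.le_add_left 1 n), Nat.add_sub_cancel,
      one_div_pow_sub_one_div_pow_sub_one (by linarith) (Nat.one_le_iff_ne_zero.1 n.2),
      sub_sub_cancel]
  obtain ⟨r₀, hr₀, h⟩ := bump_diameter_estimate_general (mul_pos two_pos hc0) hgap
    (fun n ↦ ⟨hf0 n n.2, hfmid n n.2, hf1 n n.2⟩) hs hε
  exact ⟨r₀, hr₀, fun n hn t _ ↦ h ⟨n, hn⟩ t⟩
end

section
/- Let (X,d) be a metric space with base point x₀, let 0 < c < 1/2 and define aₙ = 1/(1−2c)^{n−1} for n ≥ 1 and Kₙ = {x ∈ X : aₙ ≤ |x| ≤ aₙ₊₁}. Then for every n ≥ 2, every x ∈ Kₙ, every y ∈ Kₙ₋₁ and every z ∈ Kₙ₊₁, one has max{d(x,y), d(x,z)} ≥ c|x|. -/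
/-!
Points `y` and `z` in the two annuli adjacent to `Kₙ` are separated by the whole width of `Kₙ`, so
`d(y,z) ≥ aₙ₊₁ - aₙ = 2c·aₙ₊₁ ≥ 2c|x|`. No point `x` can be closer than half of `d(y,z)` to both.
-/

section PseudoMetricSpace

variable {X : Type*} [PseudoMetricSpace X]

theorem half_dist_le_max_dist (x y z : X) : dist y z / 2 ≤ max (dist x y) (dist x z) := by
  have htriangle : dist y z ≤ dist x y + dist x z := dist_triangle_left y z x
  linarith [le_max_left (dist x y) (dist x z), le_max_right (dist x y) (dist x z)]

theorem mul_dist_le_max_dist_of_dist_le_of_le_dist {x₀ x y z : X} {c r R : ℝ} (hc : 0 ≤ c)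
    (hrR : r ≤ (1 - 2 * c) * R) (hy : dist y x₀ ≤ r) (hx : dist x x₀ ≤ R) (hz : R ≤ dist z x₀) :
    c * dist x x₀ ≤ max (dist x y) (dist x z) := by
  have hyz : R - r ≤ dist y z := by linarith [dist_triangle_left z x₀ y]
  calc
    c * dist x x₀ ≤ c * R := by gcongr
    _ ≤ (R - r) / 2 := by linarith
    _ ≤ dist y z / 2 := by gcongr
    _ ≤ max (dist x y) (dist x z) := half_dist_le_max_dist x y z

theorem annuli_divergence_general {x₀ : X} {c : ℝ} (hc : 0 ≤ c) {a : ℕ → ℝ}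
    {K : ℕ → Set X} (hK : ∀ n, K n = {x | a n ≤ dist x x₀ ∧ dist x x₀ ≤ a (n + 1)})
    {n : ℕ} (hn : 1 ≤ n) (ha : a n ≤ (1 - 2 * c) * a (n + 1))
    {x y z : X} (hx : x ∈ K n) (hy : y ∈ K (n - 1)) (hz : z ∈ K (n + 1)) :
    c * dist x x₀ ≤ max (dist x y) (dist x z) := by
  simp only [hK, Set.mem_ofPred_eq, Nat.sub_add_cancel hn] at hx hy hz
  exact mul_dist_le_max_dist_of_dist_le_of_le_dist hc ha hy.2 hx.2 hz.1

end PseudoMetricSpace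

theorem eq_mul_succ_of_eq_one_div_pow_pred {G₀ : Type*} [GroupWithZero G₀] {q : G₀} (hq : q ≠ 0)
    {a : ℕ → G₀} (ha : ∀ n, 1 ≤ n → a n = 1 / q ^ (n - 1)) {n : ℕ} (hn : 1 ≤ n) :
    a n = q * a (n + 1) := by
  have hpow : q ^ n = q ^ (n - 1) * q := (pow_sub_one_mul (by lia) q).symm
  rw [ha n hn, ha (n + 1) n.succ_pos, Nat.add_sub_cancel, hpow, one_div, one_div, mul_inv_rev,
    mul_inv_cancel_left₀ hq]

/-- For `0 < c < 1/2`, `aₙ = 1/(1−2c)^(n−1)` and the annuli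
`Kₙ = {x : aₙ ≤ |x| ≤ aₙ₊₁}` around the base point `x₀`, for every `n ≥ 2`,
`x ∈ Kₙ`, `y ∈ Kₙ₋₁`, `z ∈ Kₙ₊₁` one has `max{d(x,y), d(x,z)} ≥ c|x|`. -/
theorem annuli_divergence {X : Type*} [MetricSpace X] (x₀ : X)
    (c : ℝ) (hc0 : 0 < c) (hc : c < 1 / 2)
    (a : ℕ → ℝ) (ha : ∀ n : ℕ, 1 ≤ n → a n = 1 / (1 - 2 * c) ^ (n - 1))
    (K : ℕ → Set X) (hK : ∀ n : ℕ, K n = {x : X | a n ≤ dist x x₀ ∧ dist x x₀ ≤ a (n + 1)}) :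
    ∀ n : ℕ, 2 ≤ n → ∀ x ∈ K n, ∀ y ∈ K (n - 1), ∀ z ∈ K (n + 1),
      c * dist x x₀ ≤ max (dist x y) (dist x z) := by
  intro n hn x hx y hy z hz
  have hratio : a n = (1 - 2 * c) * a (n + 1) :=
    eq_mul_succ_of_eq_one_div_pow_pred (by linarith) ha (one_le_two.trans hn)
  exact annuli_divergence_general hc0.le hK (one_le_two.trans hn) hratio.le hx hy hz
end

section
/- Let n ≥ 1 and α > 0, and let θ₁, …, θ_k be unit vectors in ℝⁿ such that the open balls B(θ₁, α), …, B(θ_k, α) cover the unit sphere S^{n−1}. Then there exists η > 0 such that for every x ∈ ℝⁿ with ‖x‖ ≥ 1 there is an index l with B(x, η‖x‖) ⊆ C_{θ_l}^α, where C_{θ_l}^α = ⋃_{r≥1} B(rθ_l, αr). -/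
/-!
The sphere is compact, so the cover by the balls `B(θ_l, α)` has a Lebesgue number `δ > 0`. Any
`x ≠ 0` is the dilate by `‖x‖` of a point of the sphere, so dilating gives
`B(x, δ‖x‖) ⊆ B(‖x‖θ_l, α‖x‖)` for some `l`. If `‖x‖ ≥ 1`, the latter ball is one of those that
make up the cone, hence `η = δ` works.
-/

section

open Metric hiding smul_ball
open Set
open scoped Pointwise

variable {E : Type*} [SeminormedAddCommGroup E] [NormedSpace ℝ E]

/-- The open cone `C_θ^α` with axis through `θ` and aperture `α`, truncated near the origin by
`r ≥ 1`. It is defined for every `θ` and every real `α`; it is empty when `α ≤ 0`. -/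
def openCone (θ : E) (α : ℝ) : Set E :=
  ⋃ r ∈ Ici (1 : ℝ), ball (r • θ) (α * r)

theorem smul_ball_subset_openCone (θ : E) (α : ℝ) {r : ℝ} (hr : 1 ≤ r) :
    r • ball θ α ⊆ openCone θ α := by
  have hr₀ : 0 < r := one_pos.trans_le hr
  calc r • ball θ α = ball (r • θ) (α * r) := by
        rw [smul_ball hr₀.ne', Real.norm_of_nonneg hr₀.le, mul_comm]
    _ ⊆ openCone θ α :=
        subset_biUnion_of_mem (u := fun r : ℝ ↦ ball (r • θ) (α * r)) (mem_Ici.2 hr)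

variable [ProperSpace E] {ι : Sort*}

theorem exists_ball_mul_norm_subset_norm_smul {U : ι → Set E} (hU : ∀ i, IsOpen (U i))
    (hcov : sphere (0 : E) 1 ⊆ ⋃ i, U i) :
    ∃ η > (0 : ℝ), ∀ x : E, ‖x‖ ≠ 0 → ∃ i, ball x (η * ‖x‖) ⊆ ‖x‖ • U i := by
  obtain ⟨δ, hδ, hball⟩ := lebesgue_number_lemma_of_metric (isCompact_sphere (0 : E) 1) hU hcov
  refine ⟨δ, hδ, fun x hx ↦ ?_⟩
  have hmem : ‖x‖⁻¹ • x ∈ sphere (0 : E) 1 := by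
    rw [mem_sphere_zero_iff_norm, norm_smul, norm_inv, norm_norm, inv_mul_cancel₀ hx]
  obtain ⟨i, hi⟩ := hball _ hmem
  refine ⟨i, ?_⟩
  calc ball x (δ * ‖x‖) = ‖x‖ • ball (‖x‖⁻¹ • x) δ := by
        rw [smul_ball hx, smul_inv_smul₀ hx, norm_norm, mul_comm]
    _ ⊆ ‖x‖ • U i := smul_set_mono hi

theorem cone_cover_lebesgue_general (θ : ι → E) (α : ι → ℝ)
    (hcov : sphere (0 : E) 1 ⊆ ⋃ i, ball (θ i) (α i)) :
    ∃ η > (0 : ℝ), ∀ x : E, 1 ≤ ‖x‖ → ∃ i, ball x (η * ‖x‖) ⊆ openCone (θ i) (α i) := by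
  obtain ⟨η, hη, hball⟩ := exists_ball_mul_norm_subset_norm_smul (fun _ ↦ isOpen_ball) hcov
  refine ⟨η, hη, fun x hx ↦ ?_⟩
  obtain ⟨i, hi⟩ := hball x (one_pos.trans_le hx).ne'
  exact ⟨i, hi.trans (smul_ball_subset_openCone (θ i) (α i) hx)⟩

end

/-- If the open balls `B(θ₁, α), …, B(θ_k, α)` around unit
vectors cover the unit sphere `S^{n−1}`, then there is `η > 0` such that every
`x` with `‖x‖ ≥ 1` satisfies `B(x, η‖x‖) ⊆ C_{θ_l}^α` for some `l`, where
`C_{θ_l}^α = ⋃_{r ≥ 1} B(rθ_l, αr)`.  (The Lebesgue function of the cover by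
the cones is at least linear.) -/
theorem cone_cover_lebesgue (n : ℕ) (hn : 1 ≤ n) (α : ℝ) (hα : 0 < α)
    (k : ℕ) (θ : Fin k → EuclideanSpace ℝ (Fin n)) (hθ : ∀ l, ‖θ l‖ = 1)
    (hcov : Metric.sphere (0 : EuclideanSpace ℝ (Fin n)) 1 ⊆
      ⋃ l : Fin k, Metric.ball (θ l) α) :
    ∃ η > (0 : ℝ), ∀ x : EuclideanSpace ℝ (Fin n), 1 ≤ ‖x‖ →
      ∃ l : Fin k, Metric.ball x (η * ‖x‖) ⊆
        ⋃ r ∈ Set.Ici (1 : ℝ), Metric.ball (r • θ l) (α * r) :=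
  cone_cover_lebesgue_general θ (fun _ ↦ α) hcov
end

section
/- Let n ≥ 1, let θ₁, θ₂ ∈ ℝⁿ be unit vectors, let 0 < α < 1, and suppose the closed balls N(θ₁, α) and N(θ₂, α) are disjoint. Then there exists δ > 0 such that for all a ∈ ⋃_{r≥1} N(rθ₁, αr) and all b ∈ ⋃_{r≥1} N(rθ₂, αr), one has d(a,b) ≥ δ·min{‖a‖, ‖b‖}. In particular the pair of closed cones diverges as a linear function. -/
/-!
The vectors `x + y` and `x - y` are orthogonal when `‖x‖ = ‖y‖`, being the diagonals of a rhombus,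
so `‖r x - s y‖ ≥ (r + s) / 2 * ‖x - y‖`. If `a` is within `α r` of `r x` and `b` is within `α s` of
`s y`, this gives `dist a b ≥ (‖x - y‖ / 2 - α) (r + s)`, with a positive factor because disjoint
balls of radius `α` have centres more than `2 α` apart. On the other hand `‖a‖ ≤ (‖x‖ + α) r`.
-/

open Metric

lemma norm_le_mul_of_mem_closedBall_smul {E : Type*} [SeminormedAddCommGroup E] [NormedSpace ℝ E]
    {x a : E} {r α : ℝ} (hr : 0 ≤ r) (ha : a ∈ closedBall (r • x) (α * r)) :
    ‖a‖ ≤ (‖x‖ + α) * r :=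
  calc ‖a‖ ≤ ‖r • x‖ + α * r := norm_le_norm_add_const_of_dist_le ha
    _ = (‖x‖ + α) * r := by rw [norm_smul, Real.norm_of_nonneg hr]; ring

section InnerProductSpace

variable {E : Type*} [SeminormedAddCommGroup E] [InnerProductSpace ℝ E] {x y : E}

lemma norm_smul_sub_smul_sq_of_norm_eq (h : ‖x‖ = ‖y‖) (r s : ℝ) :
    ‖r • x - s • y‖ ^ 2 = ((r + s) / 2 * ‖x - y‖) ^ 2 + ((r - s) / 2 * ‖x + y‖) ^ 2 := by
  have hdecomp : r • x - s • y = ((r + s) / 2) • (x - y) + ((r - s) / 2) • (x + y) := by module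
  have horth : inner ℝ (((r + s) / 2) • (x - y)) (((r - s) / 2) • (x + y)) = 0 := by
    rw [real_inner_smul_left, real_inner_smul_right, real_inner_comm,
      (real_inner_add_sub_eq_zero_iff x y).2 h, mul_zero, mul_zero]
  rw [hdecomp, norm_add_sq_real, horth, norm_smul, norm_smul]
  simp only [mul_pow, Real.norm_eq_abs, sq_abs, mul_zero, add_zero]

lemma half_add_mul_norm_sub_le_norm_smul_sub_smul (h : ‖x‖ = ‖y‖) (r s : ℝ) :
    (r + s) / 2 * ‖x - y‖ ≤ ‖r • x - s • y‖ := by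
  refine le_of_sq_le_sq ?_ (norm_nonneg _)
  rw [norm_smul_sub_smul_sq_of_norm_eq h]
  exact le_add_of_nonneg_right (sq_nonneg _)

lemma mul_add_le_dist_of_mem_closedBall_smul (h : ‖x‖ = ‖y‖) {a b : E} {r s α : ℝ}
    (ha : a ∈ closedBall (r • x) (α * r)) (hb : b ∈ closedBall (s • y) (α * s)) :
    (‖x - y‖ / 2 - α) * (r + s) ≤ dist a b := by
  have hcenters : (r + s) / 2 * ‖x - y‖ ≤ dist (r • x) (s • y) := by
    rw [dist_eq_norm]
    exact half_add_mul_norm_sub_le_norm_smul_sub_smul h r s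
  have htriangle : dist (r • x) (s • y) ≤ α * r + dist a b + α * s :=
    calc dist (r • x) (s • y) ≤ dist (r • x) a + dist a b + dist b (s • y) :=
          dist_triangle4 _ _ _ _
      _ ≤ α * r + dist a b + α * s := by gcongr; exacts [mem_closedBall'.1 ha, hb]
  linarith

theorem disjoint_cones_diverge_general (hxy : ‖x‖ = ‖y‖) {α : ℝ} (hα : 0 ≤ α)
    (hdisj : Disjoint (closedBall x α) (closedBall y α)) :
    ∃ δ > (0 : ℝ),
      ∀ a ∈ ⋃ r ∈ Set.Ici (0 : ℝ), closedBall (r • x) (α * r),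
      ∀ b ∈ ⋃ r ∈ Set.Ici (0 : ℝ), closedBall (r • y) (α * r),
        δ * min ‖a‖ ‖b‖ ≤ dist a b := by
  have hgap : 0 < ‖x - y‖ / 2 - α := by
    have := (disjoint_closedBall_closedBall_iff hα hα).1 hdisj
    rw [dist_eq_norm] at this
    linarith
  have hpos : 0 < ‖x‖ + α := by linarith [norm_sub_le x y]
  refine ⟨(‖x - y‖ / 2 - α) / (‖x‖ + α), div_pos hgap hpos, fun a ha b hb => ?_⟩
  simp only [Set.mem_iUnion, Set.mem_Ici, exists_prop] at ha hb
  obtain ⟨r, hr, ha⟩ := ha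
  obtain ⟨s, hs, hb⟩ := hb
  calc (‖x - y‖ / 2 - α) / (‖x‖ + α) * min ‖a‖ ‖b‖
      ≤ (‖x - y‖ / 2 - α) / (‖x‖ + α) * ((‖x‖ + α) * r) := by
        gcongr
        exact (min_le_left _ _).trans (norm_le_mul_of_mem_closedBall_smul hr ha)
    _ = (‖x - y‖ / 2 - α) * r := by field_simp
    _ ≤ (‖x - y‖ / 2 - α) * (r + s) := by gcongr; exact le_add_of_nonneg_right hs
    _ ≤ dist a b := mul_add_le_dist_of_mem_closedBall_smul hxy ha hb

end InnerProductSpace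

/-- If the closed balls `N(θ₁, α)` and `N(θ₂, α)` around unit
vectors `θ₁, θ₂` are disjoint (`0 < α < 1`), then there is `δ > 0` such that
any points `a`, `b` of the two closed cones `⋃_{r ≥ 1} N(rθᵢ, αr)` satisfy
`d(a, b) ≥ δ · min{‖a‖, ‖b‖}`; in particular the pair of closed cones diverges
as a linear function. -/
theorem disjoint_cones_diverge (n : ℕ) (hn : 1 ≤ n)
    (θ₁ θ₂ : EuclideanSpace ℝ (Fin n)) (hθ₁ : ‖θ₁‖ = 1) (hθ₂ : ‖θ₂‖ = 1)
    (α : ℝ) (hα0 : 0 < α) (hα : α < 1)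
    (hdisj : Disjoint (Metric.closedBall θ₁ α) (Metric.closedBall θ₂ α)) :
    ∃ δ > (0 : ℝ),
      ∀ a ∈ ⋃ r ∈ Set.Ici (1 : ℝ), Metric.closedBall (r • θ₁) (α * r),
      ∀ b ∈ ⋃ r ∈ Set.Ici (1 : ℝ), Metric.closedBall (r • θ₂) (α * r),
        δ * min ‖a‖ ‖b‖ ≤ dist a b := by
  obtain ⟨δ, hδ, h⟩ := disjoint_cones_diverge_general (hθ₁.trans hθ₂.symm) hα0.le hdisj
  have hIci : Set.Ici (1 : ℝ) ⊆ Set.Ici 0 := Set.Ici_subset_Ici.2 zero_le_one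
  exact ⟨δ, hδ, fun a ha b hb =>
    h a (Set.biUnion_subset_biUnion_left hIci ha) b (Set.biUnion_subset_biUnion_left hIci hb)⟩
end
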